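/- arXiv:1909.10850 — 4 statements merged into one kernel-verified Lean document; each statement's English description precedes it below -/
import Mathlib

section
/- Let G be a directed graph on n nodes with positive integer edge weights c_{u,v}, let h be a positive integer, let K be a field, and let R := K[a_{u,v} : (u,v) an edge of G or u = v] be the multivariate polynomial ring in indeterminates a_{u,v}. Define A(G) ∈ (R[X]/⟨X^h⟩)^{n×n} by: A(G)_{u,v} = a_{u,v} X^{c_{u,v}} for each edge (u,v), A(G)_{v,v} = a_{v,v} X for every node v, and A(G)_{u,v} = 0 otherwise. Then M := I − A(G) is invertible over R[X]/⟨X^h⟩, and for all nodes u,v and all integers 0 ≤ d < h, the entry (M^{−1})^{[d]}_{u,v} ∈ R is a nonzero polynomial in the indeterminates a if and only if dist_G(u,v) ≤ d. -/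
/-!
Every entry of `A = AGsym K n E c` is divisible by `X`, so `A ^ h` vanishes modulo `X ^ h` and the
geometric sum `∑_{i<h} A ^ i` is the inverse of `1 - A` there.

Expanding powers of `A` along walks shows that a nonzero coefficient of `X ^ d` at `(u, v)` forces a
walk of weight at most `d` (`exists_reachIn_of_coeff_ne_zero`). For the converse, counting walks is
not enough, since several walks may contribute the same monomial and their number may vanish in `K`.
Instead the indeterminates are specialised to `0` and `1` so that only the edges of a shortest-path
tree rooted at `u` and the loop at `u` survive. In this graph there is exactly one walk from `u` to
`v` of each weight `d ≥ dist(u, v)`: it first loops at `u` and then follows the tree. Algebraically,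
the row vector `r_v = X ^ dist(u, v) / (1 - X)` of power series satisfies `r = e_u + r A'`
(`ballSeries_vecMul`), which determines row `u` of the geometric sum modulo `X ^ h`.
-/


open scoped BigOperators Classical ENNReal

/-- `p` is a walk with `k` edges (hops) in the graph whose adjacency relation is `Adj`. -/
def IsWalk {V : Type*} (Adj : V → V → Prop) (k : ℕ) (p : Fin (k + 1) → V) : Prop :=
  ∀ i : Fin k, Adj (p i.castSucc) (p i.succ)

/-- The total weight of the walk `p` with `k` edges, for edge weights `c`. -/
noncomputable def walkCost {V : Type*} (c : V → V → ℝ≥0∞) (k : ℕ) (p : Fin (k + 1) → V) :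
    ℝ≥0∞ :=
  ∑ i : Fin k, c (p i.castSucc) (p i.succ)

/-- The shortest-path distance from `u` to `v` in the graph given by `Adj` with
edge weights `c` (it is `⊤` if there is no walk from `u` to `v`, and `0` for `u = v`). -/
noncomputable def gdist {V : Type*} (Adj : V → V → Prop) (c : V → V → ℝ≥0∞) (u v : V) :
    ℝ≥0∞ :=
  ⨅ (k : ℕ) (p : {p : Fin (k + 1) → V //
      p 0 = u ∧ p (Fin.last k) = v ∧ IsWalk Adj k p}), walkCost c k p.1

/-- The symbolic polynomial matrix `A(G)` associated to a directed graph on `Fin n` with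
edge set `E` and positive integer weights `c`: its entries are indeterminates
`a_{u,v}` in `R = K[a_{u,v} : (u,v) ∈ E or u = v]`, i.e. `A(G)_{v,v} = a_{v,v}·X`,
`A(G)_{u,v} = a_{u,v}·X^{c u v}` for edges `(u,v)` with `u ≠ v`, and `0` otherwise. -/
noncomputable def AGsym (K : Type*) [Field K] (n : ℕ) (E : Finset (Fin n × Fin n))
    (c : Fin n → Fin n → ℕ) :
    Matrix (Fin n) (Fin n)
      (Polynomial (MvPolynomial {p : Fin n × Fin n // p ∈ E ∨ p.1 = p.2} K)) :=
  Matrix.of fun u v =>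
    if huv : u = v then
      Polynomial.C (MvPolynomial.X ⟨(u, v), Or.inr huv⟩) * Polynomial.X
    else if he : (u, v) ∈ E then
      Polynomial.C (MvPolynomial.X ⟨(u, v), Or.inl he⟩) * Polynomial.X ^ (c u v)
    else 0


/-- `ReachIn E c u v m`: there is a walk from `u` to `v` along edges of `E` whose total weight is
the natural number `m`. -/
inductive ReachIn {n : ℕ} (E : Finset (Fin n × Fin n)) (c : Fin n → Fin n → ℕ) (u : Fin n) :
    Fin n → ℕ → Prop
  | refl : ReachIn E c u u 0
  | step {x v : Fin n} {m : ℕ} : ReachIn E c u x m → (x, v) ∈ E → ReachIn E c u v (m + c x v)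

/-! ### Walks, distances and shortest-path parents -/

section Walks

variable {n : ℕ} {E : Finset (Fin n × Fin n)} {c : Fin n → Fin n → ℕ} {u v : Fin n}

lemma reachIn_of_isWalk (k : ℕ) (p : Fin (k + 1) → Fin n)
    (hp : IsWalk (fun x y : Fin n => (x, y) ∈ E) k p) :
    ∃ m : ℕ, ReachIn E c (p 0) (p (Fin.last k)) m ∧
      walkCost (fun x y => (c x y : ℝ≥0∞)) k p = m := by
  induction k with
  | zero => exact ⟨0, ReachIn.refl, by simp [walkCost]⟩
  | succ k ih =>
    obtain ⟨m, hm, hcost⟩ := ih (fun i => p i.castSucc) (fun i => hp i.castSucc)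
    refine ⟨m + c (p (Fin.last k).castSucc) (p (Fin.last (k + 1))),
      ReachIn.step hm (hp (Fin.last k)), ?_⟩
    unfold walkCost at hcost ⊢
    rw [Fin.sum_univ_castSucc]
    push_cast
    rw [← hcost]
    rfl

lemma ReachIn.exists_isWalk {m : ℕ} (hr : ReachIn E c u v m) :
    ∃ (k : ℕ) (p : Fin (k + 1) → Fin n), p 0 = u ∧ p (Fin.last k) = v ∧
      IsWalk (fun x y : Fin n => (x, y) ∈ E) k p ∧
      walkCost (fun x y => (c x y : ℝ≥0∞)) k p = m := by
  induction hr with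
  | refl => exact ⟨0, fun _ => u, rfl, rfl, fun i => i.elim0, by simp [walkCost]⟩
  | @step x v m _ hE ih =>
    obtain ⟨k, p, h0, hl, hw, hcost⟩ := ih
    refine ⟨k + 1, Fin.snoc (α := fun _ => Fin n) p v, ?_, ?_, ?_, ?_⟩
    · rw [← Fin.castSucc_zero, Fin.snoc_castSucc, h0]
    · rw [Fin.snoc_last]
    · intro i
      induction i using Fin.lastCases with
      | last => simpa [Fin.succ_last, hl] using hE
      | cast i =>
        rw [Fin.succ_castSucc, Fin.snoc_castSucc, Fin.snoc_castSucc]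
        exact hw i
    · unfold walkCost at hcost ⊢
      rw [Fin.sum_univ_castSucc]
      simp only [Fin.succ_castSucc, Fin.snoc_castSucc, Fin.succ_last, Fin.snoc_last, hl, hcost]
      push_cast
      rfl

lemma gdist_le_iff (d : ℕ) :
    gdist (fun x y : Fin n => (x, y) ∈ E) (fun x y => (c x y : ℝ≥0∞)) u v ≤ (d : ℝ≥0∞) ↔
      ∃ m ≤ d, ReachIn E c u v m := by
  constructor
  · intro hle
    -- All walk weights are integers, so an infimum below `d + 1` is witnessed by a walk of
    -- weight at most `d`.
    have hlt : gdist (fun x y : Fin n => (x, y) ∈ E) (fun x y => (c x y : ℝ≥0∞)) u v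
        < ((d + 1 : ℕ) : ℝ≥0∞) :=
      lt_of_le_of_lt hle (by exact_mod_cast Nat.lt_succ_self d)
    simp only [gdist, iInf_lt_iff] at hlt
    obtain ⟨k, ⟨p, h0, hl, hw⟩, hlt⟩ := hlt
    obtain ⟨m, hm, hcost⟩ := reachIn_of_isWalk (c := c) k p hw
    rw [hcost, Nat.cast_lt] at hlt
    rw [h0, hl] at hm
    exact ⟨m, by omega, hm⟩
  · rintro ⟨m, hmd, hm⟩
    obtain ⟨k, p, h0, hl, hw, hcost⟩ := hm.exists_isWalk
    refine le_trans (iInf_le_of_le k (iInf_le_of_le ⟨p, h0, hl, hw⟩ le_rfl)) ?_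
    rw [hcost]
    exact_mod_cast hmd

/-- Existence of a parent in a shortest-path tree rooted at `u`. The last edge of a shortest walk
to `v` is not a loop, because edge weights are positive. -/
lemma exists_parent (hc : ∀ u v : Fin n, (u, v) ∈ E → 0 < c u v) (huv : v ≠ u)
    (hv : ∃ m, ReachIn E c u v m) :
    ∃ x, (x, v) ∈ E ∧ x ≠ v ∧
      ∀ d, (∃ m ≤ d, ReachIn E c u v m) ↔ c x v ≤ d ∧ ∃ m ≤ d - c x v, ReachIn E c u x m := by
  obtain ⟨m₀, hm₀, hmin⟩ : ∃ m, ReachIn E c u v m ∧ ∀ m', ReachIn E c u v m' → m ≤ m' :=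
    ⟨Nat.find hv, Nat.find_spec hv, fun m' h' => Nat.find_min' hv h'⟩
  cases hm₀ with
  | refl => exact absurd rfl huv
  | @step x _ m hx hE =>
    refine ⟨x, hE, ?_, fun d => ⟨?_, ?_⟩⟩
    · rintro rfl
      have := hmin _ hx
      have := hc _ _ hE
      omega
    · rintro ⟨m', hm', hr⟩
      have := hmin _ hr
      exact ⟨by omega, m, by omega, hx⟩
    · rintro ⟨hle, m', hm', hr⟩
      exact ⟨m' + c x v, by omega, hr.step hE⟩

end Walks

/-! ### Powers and specialisations of the symbolic matrix -/

section Matrix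

variable {K : Type*} [Field K] {n : ℕ} {E : Finset (Fin n × Fin n)} {c : Fin n → Fin n → ℕ}

/-- `A(G)` is `X` times a polynomial matrix, so `A(G) ^ h` is divisible by `X ^ h`; this uses that
the edge weights are positive. -/
lemma AGsym_pow_eq (hc : ∀ u v : Fin n, (u, v) ∈ E → 0 < c u v) :
    ∃ B, ∀ h : ℕ, AGsym K n E c ^ h = (Polynomial.X ^ h :
      Polynomial (MvPolynomial {p : Fin n × Fin n // p ∈ E ∨ p.1 = p.2} K)) • B ^ h := by
  have hdvd : ∀ u v, (Polynomial.X :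
      Polynomial (MvPolynomial {p : Fin n × Fin n // p ∈ E ∨ p.1 = p.2} K)) ∣
        AGsym K n E c u v := by
    intro u v
    simp only [AGsym, Matrix.of_apply]
    split_ifs with h1 h2
    · exact dvd_mul_left _ _
    · exact Dvd.dvd.mul_left (dvd_pow_self _ (hc u v h2).ne') _
    · exact dvd_zero _
  choose B hB using hdvd
  refine ⟨Matrix.of B, fun h => ?_⟩
  rw [← smul_pow]
  congr 1
  ext1 u v
  simp [hB u v]

lemma exists_reachIn_of_coeff_ne_zero {u : Fin n} (i : ℕ) (v : Fin n) (d : ℕ)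
    (hne : ((AGsym K n E c ^ i) u v).coeff d ≠ 0) : ∃ m ≤ d, ReachIn E c u v m := by
  induction i generalizing v d with
  | zero =>
    by_cases huv : u = v
    · subst huv
      exact ⟨0, Nat.zero_le _, ReachIn.refl⟩
    · simp [Matrix.one_apply_ne huv] at hne
  | succ i ih =>
    rw [pow_succ, Matrix.mul_apply, Polynomial.finsetSum_coeff] at hne
    obtain ⟨x, -, hx⟩ := Finset.exists_ne_zero_of_sum_ne_zero hne
    simp only [AGsym, Matrix.of_apply] at hx
    split_ifs at hx with h1 h2
    · subst h1
      rw [← mul_assoc] at hx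
      cases d with
      | zero => simp at hx
      | succ d =>
        rw [Polynomial.coeff_mul_X, Polynomial.coeff_mul_C] at hx
        obtain ⟨m, hm, hr⟩ := ih _ _ (left_ne_zero_of_mul hx)
        exact ⟨m, by omega, hr⟩
    · rw [← mul_assoc, Polynomial.coeff_mul_X_pow'] at hx
      split_ifs at hx with hle
      · rw [Polynomial.coeff_mul_C] at hx
        obtain ⟨m, hm, hr⟩ := ih _ _ (left_ne_zero_of_mul hx)
        exact ⟨m + c x v, by omega, hr.step h2⟩
      · exact absurd rfl hx
    · simp at hx

/-- The power series `∑_{d ≥ dist(u, v)} X ^ d = X ^ dist(u, v) / (1 - X)`, which is `0` if `v` is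
not reachable from `u`. -/
noncomputable def ballSeries (K : Type*) [Field K] {n : ℕ} (E : Finset (Fin n × Fin n))
    (c : Fin n → Fin n → ℕ) (u v : Fin n) : PowerSeries K :=
  PowerSeries.mk fun d => if ∃ m ≤ d, ReachIn E c u v m then 1 else 0

/-- The ring homomorphism `K[a][X] → K⟦X⟧` that evaluates the indeterminates `a` at `b`. -/
noncomputable def specializeHom {σ : Type*} (b : σ → K) :
    Polynomial (MvPolynomial σ K) →+* PowerSeries K :=
  Polynomial.coeToPowerSeries.ringHom.comp (Polynomial.mapRingHom (MvPolynomial.eval b))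

lemma coeff_specialize {σ : Type*} (b : σ → K) (q : Polynomial (MvPolynomial σ K)) (d : ℕ) :
    PowerSeries.coeff d (specializeHom b q) = MvPolynomial.eval b (q.coeff d) := by
  simp [specializeHom]

lemma specialize_X {σ : Type*} (b : σ → K) : specializeHom b Polynomial.X = PowerSeries.X := by
  simp [specializeHom]

lemma specialize_C_X {σ : Type*} (b : σ → K) (s : σ) :
    specializeHom b (Polynomial.C (MvPolynomial.X s)) = PowerSeries.C (b s) := by
  simp [specializeHom]

/-- Specialising `A(G)` to a shortest-path tree rooted at `u`, together with the loop at `u`,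
makes the row vector of `ballSeries` a solution of `r (1 - A') = e_u`. -/
lemma ballSeries_vecMul (hc : ∀ u v : Fin n, (u, v) ∈ E → 0 < c u v) (u : Fin n) :
    ∃ b : {p : Fin n × Fin n // p ∈ E ∨ p.1 = p.2} → K,
      Matrix.vecMul (ballSeries K E c u) (1 - (specializeHom b).mapMatrix (AGsym K n E c)) =
        Pi.single u 1 := by
  choose! par hparE hparne hpar using
    fun (v : Fin n) (hv : v ≠ u ∧ ∃ m, ReachIn E c u v m) => exists_parent hc hv.1 hv.2
  refine ⟨fun p => if p.1.2 = u then (if p.1.1 = u then 1 else 0) else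
    if p.1.1 = par p.1.2 ∧ ∃ m, ReachIn E c u p.1.2 m then 1 else 0, ?_⟩
  rw [Matrix.vecMul_sub, Matrix.vecMul_one, sub_eq_iff_eq_add]
  funext v
  simp only [Pi.add_apply, Matrix.vecMul, dotProduct, RingHom.mapMatrix_apply, Matrix.map_apply]
  by_cases hvu : v = u
  · subst hvu
    rw [Finset.sum_eq_single v]
    · ext d
      have hrefl : ∀ d, ∃ m ≤ d, ReachIn E c v v m := fun d => ⟨0, Nat.zero_le _, ReachIn.refl⟩
      cases d with
      | zero => simp [AGsym, ballSeries, specialize_X, specialize_C_X, hrefl]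
      | succ d =>
        simp [AGsym, specialize_X, specialize_C_X, PowerSeries.coeff_succ_mul_X,
          PowerSeries.coeff_one, ballSeries, hrefl]
    · intro x _ hx
      simp only [AGsym, Matrix.of_apply]
      split_ifs with h1 h2
      · exact absurd h1 hx
      · simp [specialize_C_X, hx]
      · simp
    · simp
  · rw [Pi.single_eq_of_ne hvu, zero_add]
    by_cases hreach : ∃ m, ReachIn E c u v m
    · rw [Finset.sum_eq_single (par v)]
      · have h1 := hparE v ⟨hvu, hreach⟩
        have h2 := hparne v ⟨hvu, hreach⟩
        have h3 := hpar v ⟨hvu, hreach⟩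
        ext d
        simp only [AGsym, Matrix.of_apply, dif_neg h2, dif_pos h1, map_mul, map_pow, specialize_X,
          specialize_C_X, if_neg hvu, hreach, if_true, map_one, one_mul,
          PowerSeries.coeff_mul_X_pow', ballSeries, PowerSeries.coeff_mk, h3, ite_and]
      · intro x _ hx
        simp only [AGsym, Matrix.of_apply]
        split_ifs with h1 h2
        · subst h1; simp [specialize_C_X, hvu, hx]
        · simp [specialize_C_X, hvu, hx]
        · simp
      · simp
    · have h0 : ballSeries K E c u v = 0 := by
        ext d
        have : ¬ ∃ m ≤ d, ReachIn E c u v m := fun ⟨m, _, hm⟩ => hreach ⟨m, hm⟩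
        simp [ballSeries, this]
      rw [h0, Finset.sum_eq_zero]
      intro x _
      simp only [AGsym, Matrix.of_apply]
      split_ifs with h1 h2
      · subst h1; simp [specialize_C_X, hvu, hreach]
      · simp [specialize_C_X, hvu, hreach]
      · simp

/-- The coefficient of `X ^ d` is nonzero because its value at the shortest-path-tree
specialisation is the corresponding coefficient of `ballSeries`, namely `1`. -/
lemma coeff_ne_zero_of_reachIn (hc : ∀ u v : Fin n, (u, v) ∈ E → 0 < c u v) {h d : ℕ} (hd : d < h)
    {u v : Fin n} (hr : ∃ m ≤ d, ReachIn E c u v m) :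
    ((∑ i ∈ Finset.range h, AGsym K n E c ^ i) u v).coeff d ≠ 0 := by
  obtain ⟨b, hb⟩ := ballSeries_vecMul (K := K) hc u
  obtain ⟨B, hB⟩ := AGsym_pow_eq (K := K) hc
  intro h0
  -- Multiplying `r (1 - A') = e_u` by the geometric sum gives `r (1 - A' ^ h)` on the left.
  have key := congrArg (fun w => Matrix.vecMul w
    ((specializeHom b).mapMatrix (∑ i ∈ Finset.range h, AGsym K n E c ^ i))) hb
  simp only [Matrix.vecMul_vecMul] at key
  rw [← map_one (specializeHom b).mapMatrix, ← map_sub, ← map_mul, mul_neg_geom_sum, hB h] at key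
  have key2 := congrArg (PowerSeries.coeff d) (congrFun key v)
  rw [map_sub, map_one, Matrix.vecMul_sub, Matrix.vecMul_one, Pi.sub_apply, map_sub,
    Matrix.single_one_vecMul, Matrix.row_apply] at key2
  have hzero : PowerSeries.coeff d
      ((specializeHom b).mapMatrix (∑ i ∈ Finset.range h, AGsym K n E c ^ i) u v) = 0 := by
    rw [RingHom.mapMatrix_apply, Matrix.map_apply, coeff_specialize, h0, map_zero]
  have htail : PowerSeries.coeff d (Matrix.vecMul (ballSeries K E c u)
      ((specializeHom b).mapMatrix ((Polynomial.X ^ h :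
      Polynomial (MvPolynomial {p : Fin n × Fin n // p ∈ E ∨ p.1 = p.2} K)) • B ^ h)) v) = 0 := by
    simp only [Matrix.vecMul, dotProduct, map_sum]
    refine Finset.sum_eq_zero fun x _ => ?_
    rw [RingHom.mapMatrix_apply, Matrix.map_apply, Matrix.smul_apply, smul_eq_mul,
      (specializeHom b).map_mul, map_pow, specialize_X, mul_left_comm, PowerSeries.coeff_X_pow_mul', if_neg (by omega)]
  rw [htail, hzero] at key2
  simp [ballSeries, hr] at key2

lemma map_geom_sum_mul_eq_one (hc : ∀ u v : Fin n, (u, v) ∈ E → 0 < c u v) {S : Type*}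
    [CommRing S] {h : ℕ}
    (φ : Polynomial (MvPolynomial {p : Fin n × Fin n // p ∈ E ∨ p.1 = p.2} K) →+* S)
    (hφ : φ (Polynomial.X ^ h) = 0) :
    (1 - (AGsym K n E c).map (fun q => φ q)) *
      (∑ i ∈ Finset.range h, AGsym K n E c ^ i).map (fun q => φ q) = 1 := by
  obtain ⟨B, hB⟩ := AGsym_pow_eq (K := K) hc
  have hpow : φ.mapMatrix (AGsym K n E c ^ h) = 0 := by
    rw [hB h]
    ext1 x y
    rw [RingHom.mapMatrix_apply, Matrix.map_apply, Matrix.smul_apply, smul_eq_mul, map_mul, hφ,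
      zero_mul, Matrix.zero_apply]
  change (1 - φ.mapMatrix (AGsym K n E c)) * φ.mapMatrix _ = 1
  rw [← map_one φ.mapMatrix, ← map_sub, ← map_mul, mul_neg_geom_sum, map_sub, hpow, sub_zero]

end Matrix

/-- **Symbolic matrix inverse detects distances exactly.**
The matrix `M = I - A(G)` over `R[X]/⟨X^h⟩` (with `R` the multivariate polynomial ring in
the indeterminates `a`) is invertible, with inverse `∑_{i<h} A(G)^i` (reduced mod `X^h`);
and for all nodes `u, v` and all `0 ≤ d < h`, the coefficient `(M⁻¹)^{[d]}_{u,v} ∈ R` is a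
nonzero polynomial in the indeterminates `a` if and only if `dist_G(u,v) ≤ d`. -/
theorem stmt_5 {K : Type*} [Field K] (n h : ℕ) (hh : 0 < h)
    (E : Finset (Fin n × Fin n)) (c : Fin n → Fin n → ℕ)
    (hc : ∀ u v : Fin n, (u, v) ∈ E → 0 < c u v) :
    IsUnit
      ((1 : Matrix (Fin n) (Fin n)
          ((Polynomial (MvPolynomial {p : Fin n × Fin n // p ∈ E ∨ p.1 = p.2} K)) ⧸
            Ideal.span
              {(Polynomial.X :
                Polynomial (MvPolynomial {p : Fin n × Fin n // p ∈ E ∨ p.1 = p.2} K)) ^ h})) -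
        (AGsym K n E c).map (fun q =>
          Ideal.Quotient.mk
            (Ideal.span
              {(Polynomial.X :
                Polynomial (MvPolynomial {p : Fin n × Fin n // p ∈ E ∨ p.1 = p.2} K)) ^ h})
            q)) ∧
    ((1 : Matrix (Fin n) (Fin n)
          ((Polynomial (MvPolynomial {p : Fin n × Fin n // p ∈ E ∨ p.1 = p.2} K)) ⧸
            Ideal.span
              {(Polynomial.X :
                Polynomial (MvPolynomial {p : Fin n × Fin n // p ∈ E ∨ p.1 = p.2} K)) ^ h})) -
        (AGsym K n E c).map (fun q =>
          Ideal.Quotient.mk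
            (Ideal.span
              {(Polynomial.X :
                Polynomial (MvPolynomial {p : Fin n × Fin n // p ∈ E ∨ p.1 = p.2} K)) ^ h})
            q))⁻¹ =
      (∑ i ∈ Finset.range h, AGsym K n E c ^ i).map (fun q =>
        Ideal.Quotient.mk
          (Ideal.span
            {(Polynomial.X :
              Polynomial (MvPolynomial {p : Fin n × Fin n // p ∈ E ∨ p.1 = p.2} K)) ^ h})
          q) ∧
    (∀ u v : Fin n, ∀ d : ℕ, d < h →
      (((∑ i ∈ Finset.range h, AGsym K n E c ^ i) u v).coeff d ≠ 0 ↔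
        gdist (fun x y : Fin n => (x, y) ∈ E) (fun x y => (c x y : ℝ≥0∞)) u v ≤
          (d : ℝ≥0∞))) := by
  have hmul := map_geom_sum_mul_eq_one (K := K) (h := h) hc
    (S := (Polynomial (MvPolynomial {p : Fin n × Fin n // p ∈ E ∨ p.1 = p.2} K)) ⧸
      Ideal.span {(Polynomial.X :
        Polynomial (MvPolynomial {p : Fin n × Fin n // p ∈ E ∨ p.1 = p.2} K)) ^ h})
    (Ideal.Quotient.mk _)
    (Ideal.Quotient.eq_zero_iff_mem.2 (Ideal.mem_span_singleton_self _))
  refine ⟨(Matrix.isUnit_iff_isUnit_det _).2 (Matrix.isUnit_det_of_right_inverse hmul),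
    Matrix.inv_eq_right_inv hmul, fun u v d hd => ?_⟩
  rw [gdist_le_iff]
  refine ⟨fun hne => ?_, coeff_ne_zero_of_reachIn hc hd⟩
  rw [Matrix.sum_apply, Polynomial.finsetSum_coeff] at hne
  obtain ⟨i, -, hi⟩ := Finset.exists_ne_zero_of_sum_ne_zero hne
  exact exists_reachIn_of_coeff_ne_zero i v d hi
end

section
/- Let G be a directed graph with n nodes and real edge weights in [1,W], let h ≥ 1 be an integer, let δ ≥ 0 and c > 0. Let D ∈ (ℝ∪{∞})^{V×V} be a (1+δ)-approximate h-hop distance matrix of G. Let H ⊆ V be a uniformly random subset of size ⌈c (n/h) ln n⌉ (assumed at most n), and define D̂ := D_{V,H} ⋆ D_{H,H}^{(⋆ |H|)} ⋆ D_{H,V}, where ⋆ is the min-plus product and (⋆ |H|) is the |H|-th min-plus power. Then: (i) dist_G(u,v) ≤ D̂_{u,v} for all nodes u,v; and (ii) with probability at least 1 − n^{2−c}, for every pair u,v such that some shortest u–v path uses at least h edges, D̂_{u,v} ≤ (1+δ)·dist_G(u,v). -/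
/-!
The bound `dist ≤ D̂` is the triangle inequality, since every entry of `D` dominates the distance.

For the upper bound, call `H` *good* if for every pair `x, y` joined by a shortest walk with
exactly `h - 1` edges, some vertex of `H` lies on a shortest `x`-`y` walk with `h - 1` edges
(`IsHitting`).  If `H` is good, a shortest walk from `x ∈ H` to `v` with more than `h` edges can be
rerouted, on its second through `(h+1)`-st vertices, so as to meet `H` again after between `1` and
`h` edges; one such step costs at most `1 + δ` times the distance travelled, and iterating leads to
a vertex of `H` at most `h` edges away from `v` (`exists_chain`).  Distances to `v` strictly
decrease along this chain of vertices of `H`, so it has at most `|H|` steps, and it can be padded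
to exactly `|H|` steps because `D y y = 0`.

A shortest walk with `h - 1` edges has `h` distinct vertices, since edge weights are positive.  A
`k`-subset of an `n`-set avoids a fixed set of `h` vertices for at most a fraction
`C(n-h,k) / C(n,k) ≤ (1 - h/n)^k ≤ exp(-hk/n) ≤ n^(-c)` of all `k`-subsets, and a union bound over
the `n^2` pairs gives the claim.
-/

open scoped BigOperators Classical ENNReal

/-- `m`-th min-plus power of the `H × H` submatrix of `D` (with min-plus identity as the
`0`-th power). -/
noncomputable def mpowH {V : Type*} [DecidableEq V] (H : Finset V) (D : V → V → ℝ≥0∞) :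
    ℕ → V → V → ℝ≥0∞
  | 0 => fun x y => if x = y then 0 else ⊤
  | m + 1 => fun x y => ⨅ z ∈ H, mpowH H D m x z + D z y

/-- The min-plus triple product `D_{V,H} ⋆ D_{H,H}^{(⋆ |H|)} ⋆ D_{H,V}` evaluated at
`(u,v)`. -/
noncomputable def mpTriple {V : Type*} [DecidableEq V] (H : Finset V) (D : V → V → ℝ≥0∞)
    (u v : V) : ℝ≥0∞ :=
  ⨅ x ∈ H, ⨅ y ∈ H, D u x + mpowH H D H.card x y + D y v

/-- There is a walk from `u` to `v` with `m` edges and total weight `w`.  The walk is a function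
on all of `ℕ` of which only the values at `0, …, m` matter; this makes shifting and
concatenation simple. -/
def HasWalk {V : Type*} (Adj : V → V → Prop) (cw : V → V → ℝ≥0∞) (m : ℕ) (u v : V)
    (w : ℝ≥0∞) : Prop :=
  ∃ p : ℕ → V, p 0 = u ∧ p m = v ∧ (∀ i < m, Adj (p i) (p (i + 1))) ∧
    ∑ i ∈ Finset.range m, cw (p i) (p (i + 1)) = w

/-- Some shortest walk from `u` to `v` has exactly `m` edges. -/
def HasShortest {V : Type*} (Adj : V → V → Prop) (cw : V → V → ℝ≥0∞) (m : ℕ) (u v : V) : Prop :=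
  HasWalk Adj cw m u v (gdist Adj cw u v)

/-- The vertex `z` lies on a shortest walk from `x` to `y` with `l` edges. -/
def OnShortest {V : Type*} (Adj : V → V → Prop) (cw : V → V → ℝ≥0∞) (l : ℕ) (x y z : V) : Prop :=
  ∃ i j, i + j = l ∧ HasShortest Adj cw i x z ∧ HasShortest Adj cw j z y ∧
    gdist Adj cw x z + gdist Adj cw z y = gdist Adj cw x y

/-- Whenever `x` and `y` are joined by a shortest walk with `l` edges, one such walk meets `H`. -/
def IsHitting {V : Type*} (Adj : V → V → Prop) (cw : V → V → ℝ≥0∞) (l : ℕ) (H : Finset V) : Prop :=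
  ∀ x y, HasShortest Adj cw l x y → ∃ z ∈ H, OnShortest Adj cw l x y z

/-! ### Walks, distances and shortest walks -/

section Walks

variable {V : Type*} {Adj : V → V → Prop} {cw : V → V → ℝ≥0∞}

lemma HasWalk.iff_fin {m : ℕ} {u v : V} {w : ℝ≥0∞} :
    HasWalk Adj cw m u v w ↔ ∃ p : Fin (m + 1) → V, p 0 = u ∧ p (Fin.last m) = v ∧
      IsWalk Adj m p ∧ walkCost cw m p = w := by
  constructor
  · rintro ⟨p, h0, h1, h2, h3⟩
    refine ⟨fun i => p i, by simpa using h0, by simpa using h1, ?_, ?_⟩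
    · intro i
      simpa using h2 i i.2
    · rw [← h3, walkCost, Finset.sum_range]
      simp
  · rintro ⟨p, h0, h1, h2, h3⟩
    have key : ∀ i : Fin (m + 1), p ⟨min i.1 m, by omega⟩ = p i := by
      intro i
      congr 1
      ext
      simp
      omega
    refine ⟨fun i => p ⟨min i m, by omega⟩, ?_, ?_, ?_, ?_⟩
    · rw [← h0]; exact key 0
    · rw [← h1]; exact key (Fin.last m)
    · intro i hi
      have := h2 ⟨i, hi⟩
      rw [← key, ← key (Fin.succ _)] at this
      exact this
    · rw [← h3, walkCost, Finset.sum_range]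
      refine Finset.sum_congr rfl fun i _ => ?_
      rw [← key i.castSucc, ← key i.succ]
      rfl

lemma HasWalk.gdist_le {m : ℕ} {u v : V} {w : ℝ≥0∞} (hw : HasWalk Adj cw m u v w) :
    gdist Adj cw u v ≤ w := by
  obtain ⟨p, h0, h1, h2, h3⟩ := HasWalk.iff_fin.1 hw
  rw [← h3]
  exact iInf_le_of_le m (iInf_le_of_le ⟨p, h0, h1, h2⟩ le_rfl)

lemma le_gdist {u v : V} {a : ℝ≥0∞} (H : ∀ m w, HasWalk Adj cw m u v w → a ≤ w) :
    a ≤ gdist Adj cw u v :=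
  le_iInf fun m => le_iInf fun p =>
    H m _ (HasWalk.iff_fin.2 ⟨p.1, p.2.1, p.2.2.1, p.2.2.2, rfl⟩)

lemma HasWalk.append {m l : ℕ} {u x v : V} {a b : ℝ≥0∞} (h1 : HasWalk Adj cw m u x a)
    (h2 : HasWalk Adj cw l x v b) : HasWalk Adj cw (m + l) u v (a + b) := by
  obtain ⟨p, p0, pm, pw, ps⟩ := h1
  obtain ⟨q, q0, qm, qw, qs⟩ := h2
  have e1 : ∀ i, i ≤ m → (if i ≤ m then p i else q (i - m)) = p i := fun i hi => if_pos hi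
  have e2 : ∀ i, (if m + i ≤ m then p (m + i) else q (m + i - m)) = q i := by
    intro i
    split_ifs with hi
    · obtain rfl : i = 0 := by omega
      simp [pm, q0]
    · simp
  refine ⟨fun i => if i ≤ m then p i else q (i - m), ?_, ?_, ?_, ?_⟩
  · simpa using p0
  · simp only [e2, qm]
  · intro i hi
    rcases lt_or_ge i m with h | h
    · simp only [e1 i h.le, e1 (i + 1) h]
      exact pw i h
    · obtain ⟨j, rfl⟩ := Nat.exists_eq_add_of_le h
      simp only [e2, add_assoc]
      exact qw j (by omega)
  · rw [Finset.sum_range_add, ← ps, ← qs]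
    congr 1
    · refine Finset.sum_congr rfl fun i hi => ?_
      have := Finset.mem_range.1 hi
      simp only [e1 i this.le, e1 (i + 1) this]
    · refine Finset.sum_congr rfl fun i hi => ?_
      simp only [e2, add_assoc]

lemma gdist_triangle (u x v : V) :
    gdist Adj cw u v ≤ gdist Adj cw u x + gdist Adj cw x v := by
  have : ∀ m a, HasWalk Adj cw m u x a → gdist Adj cw u v ≤ a + gdist Adj cw x v := by
    intro m a ha
    rw [← tsub_le_iff_left]
    refine le_gdist fun l b hb => ?_
    rw [tsub_le_iff_left]
    exact (ha.append hb).gdist_le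
  rw [← tsub_le_iff_right]
  refine le_gdist fun m a ha => ?_
  rw [tsub_le_iff_right]
  exact this m a ha

lemma gdist_self (x : V) : gdist Adj cw x x = 0 :=
  le_antisymm (HasWalk.gdist_le (m := 0) ⟨fun _ => x, rfl, rfl, by simp, by simp⟩) zero_le

lemma HasShortest.self (x : V) : HasShortest Adj cw 0 x x :=
  ⟨fun _ => x, rfl, rfl, by simp, by simp [gdist_self]⟩

lemma HasShortest.append {i j : ℕ} {u x v : V} (h1 : HasShortest Adj cw i u x)
    (h2 : HasShortest Adj cw j x v)
    (e : gdist Adj cw u x + gdist Adj cw x v = gdist Adj cw u v) :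
    HasShortest Adj cw (i + j) u v := by
  unfold HasShortest
  rw [← e]
  exact HasWalk.append h1 h2

section Weights

variable {W : ℝ} (hcw : ∀ u v, Adj u v → 1 ≤ cw u v ∧ cw u v ≤ ENNReal.ofReal W)
include hcw

lemma HasWalk.ne_top {m : ℕ} {u v : V} {w : ℝ≥0∞} (hw : HasWalk Adj cw m u v w) : w ≠ ⊤ := by
  obtain ⟨p, -, -, pw, rfl⟩ := hw
  refine (ENNReal.sum_lt_top.2 fun i hi => ?_).ne
  exact ((hcw _ _ (pw i (Finset.mem_range.1 hi))).2).trans_lt ENNReal.ofReal_lt_top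

lemma HasWalk.le_weight {m : ℕ} {u v : V} {w : ℝ≥0∞} (hw : HasWalk Adj cw m u v w) :
    (m : ℝ≥0∞) ≤ w := by
  obtain ⟨p, -, -, pw, rfl⟩ := hw
  calc (m : ℝ≥0∞) = ∑ i ∈ Finset.range m, 1 := by simp
    _ ≤ _ := Finset.sum_le_sum fun i hi => (hcw _ _ (pw i (Finset.mem_range.1 hi))).1

/-- Both parts of a shortest walk cut at its `i`-th vertex are shortest. -/
lemma shortest_cut {i j : ℕ} {p : ℕ → V} (pw : ∀ t < i + j, Adj (p t) (p (t + 1)))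
    (ps : ∑ t ∈ Finset.range (i + j), cw (p t) (p (t + 1)) = gdist Adj cw (p 0) (p (i + j))) :
    HasShortest Adj cw i (p 0) (p i) ∧ HasShortest Adj cw j (p i) (p (i + j)) ∧
      gdist Adj cw (p 0) (p i) + gdist Adj cw (p i) (p (i + j)) =
        gdist Adj cw (p 0) (p (i + j)) := by
  have w1 : HasWalk Adj cw i (p 0) (p i) (∑ t ∈ Finset.range i, cw (p t) (p (t + 1))) :=
    ⟨p, rfl, rfl, fun t ht => pw t (by omega), rfl⟩
  have w2 : HasWalk Adj cw j (p i) (p (i + j))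
      (∑ t ∈ Finset.range j, cw (p (i + t)) (p (i + t + 1))) :=
    ⟨fun t => p (i + t), rfl, rfl, fun t ht => pw (i + t) (by omega), rfl⟩
  rw [Finset.sum_range_add] at ps
  have f1 := w1.ne_top hcw
  have f2 := w2.ne_top hcw
  have l1 := w1.gdist_le
  have l2 := w2.gdist_le
  have tri := gdist_triangle (Adj := Adj) (cw := cw) (p 0) (p i) (p (i + j))
  unfold HasShortest
  generalize (∑ t ∈ Finset.range i, cw (p t) (p (t + 1))) = a at *
  generalize (∑ t ∈ Finset.range j, cw (p (i + t)) (p (i + t + 1))) = b at *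
  rw [← ps] at tri ⊢
  have e1 : gdist Adj cw (p 0) (p i) = a := by
    refine le_antisymm l1 ?_
    exact (ENNReal.add_le_add_iff_right f2).1 (tri.trans (by gcongr))
  have e2 : gdist Adj cw (p i) (p (i + j)) = b := by
    refine le_antisymm l2 ?_
    exact (ENNReal.add_le_add_iff_left f1).1 (tri.trans (by gcongr))
  rw [e1, e2]
  exact ⟨w1, w2, rfl⟩

lemma HasShortest.split {i j : ℕ} {u v : V} (hs : HasShortest Adj cw (i + j) u v) :
    ∃ x, HasShortest Adj cw i u x ∧ HasShortest Adj cw j x v ∧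
      gdist Adj cw u x + gdist Adj cw x v = gdist Adj cw u v := by
  obtain ⟨p, rfl, rfl, pw, ps⟩ := hs
  exact ⟨p i, shortest_cut hcw pw ps⟩

/-- A shortest walk with `l` edges has `l + 1` distinct vertices: distances from its first vertex
strictly increase along it. -/
lemma card_onShortest [Fintype V] {l : ℕ} {x y : V} (hs : HasShortest Adj cw l x y) :
    l + 1 ≤ (Finset.univ.filter fun z => OnShortest Adj cw l x y z).card := by
  obtain ⟨p, rfl, rfl, pw, ps⟩ := hs
  have cut : ∀ i ≤ l, HasShortest Adj cw i (p 0) (p i) ∧ HasShortest Adj cw (l - i) (p i) (p l) ∧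
      gdist Adj cw (p 0) (p i) + gdist Adj cw (p i) (p l) = gdist Adj cw (p 0) (p l) := by
    intro i hi
    obtain ⟨j, rfl⟩ := Nat.exists_eq_add_of_le hi
    simpa using shortest_cut hcw pw ps
  have lt : ∀ i j, i < j → j ≤ l → p i ≠ p j := by
    intro i j hij hj e
    obtain ⟨-, a2, a3⟩ := cut i (by omega)
    obtain ⟨b1, b2, -⟩ := cut j hj
    obtain ⟨d, rfl⟩ := Nat.exists_eq_add_of_lt hij
    -- a prefix of a shortest walk is shortest, so it can be cut once more at its `i`-th vertex
    have psub : ∑ t ∈ Finset.range (i + (d + 1)), cw (p t) (p (t + 1)) =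
        gdist Adj cw (p 0) (p (i + (d + 1))) := by
      refine le_antisymm ?_ (HasWalk.gdist_le ⟨p, rfl, rfl, fun t ht => pw t (by omega), rfl⟩)
      have f2 := b2.ne_top hcw
      rw [← ENNReal.add_le_add_iff_right f2]
      have e3 := (cut _ hj).2.2
      rw [add_assoc] at e3 f2
      rw [add_assoc, e3, ← ps]
      obtain ⟨r, rfl⟩ := Nat.exists_eq_add_of_le hj
      rw [add_assoc i d 1, Finset.sum_range_add _ (i + (d + 1)) r]
      gcongr
      exact HasWalk.gdist_le
        ⟨fun t => p (i + (d + 1) + t), rfl, rfl, fun t ht => pw _ (by omega), rfl⟩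
    obtain ⟨c1, c2, c3⟩ := shortest_cut (i := i) (j := d + 1) hcw
      (fun t ht => pw t (by omega)) psub
    have := c2.le_weight hcw
    rw [← add_assoc, ← e, gdist_self] at this
    simp at this
  have inj : Set.InjOn p (Finset.range (l + 1) : Set ℕ) := by
    intro i hi j hj e
    simp only [Finset.coe_range, Set.mem_Iio] at hi hj
    rcases lt_trichotomy i j with h | h | h
    · exact absurd e (lt i j h (by omega))
    · exact h
    · exact absurd e.symm (lt j i h (by omega))
  rw [← Finset.card_range (l + 1), ← Finset.card_image_of_injOn inj]
  refine Finset.card_le_card fun z hz => ?_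
  obtain ⟨i, hi, rfl⟩ := Finset.mem_image.1 hz
  have hi : i ≤ l := by have := Finset.mem_range.1 hi; omega
  exact Finset.mem_filter.2 ⟨Finset.mem_univ _, i, l - i, by omega, cut i hi⟩

end Weights

end Walks

/-! ### Min-plus powers and chains through a hitting set -/

section MinPlus

variable {V : Type*} [DecidableEq V] {H : Finset V} {D : V → V → ℝ≥0∞}

lemma gdist_le_mpowH {Adj : V → V → Prop} {cw : V → V → ℝ≥0∞}
    (hD1 : ∀ u v, gdist Adj cw u v ≤ D u v) (m : ℕ) (x y : V) :
    gdist Adj cw x y ≤ mpowH H D m x y := by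
  induction m generalizing y with
  | zero =>
    simp only [mpowH]
    split_ifs with e
    · rw [e, gdist_self]
    · exact le_top
  | succ m ih =>
    exact le_iInf₂ fun z _ => (gdist_triangle x z y).trans (add_le_add (ih z) (hD1 z y))

lemma mpowH_succ_le_right {m : ℕ} {x y z : V} (hz : z ∈ H) :
    mpowH H D (m + 1) x y ≤ mpowH H D m x z + D z y :=
  iInf₂_le z hz

/-- `mpowH` is defined by multiplying by `D` on the right; this is the step on the left. -/
lemma mpowH_succ_le_left {m : ℕ} {x y z : V} (hx : x ∈ H) :
    mpowH H D (m + 1) x y ≤ D x z + mpowH H D m z y := by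
  induction m generalizing y with
  | zero =>
    by_cases e : z = y
    · subst e
      refine (mpowH_succ_le_right hx).trans ?_
      simp [mpowH]
    · simp [mpowH, e]
  | succ m ih =>
    have : D x z + mpowH H D (m + 1) z y =
        ⨅ w ∈ H, (D x z + (mpowH H D m z w + D w y)) := by
      simp only [mpowH, ENNReal.add_iInf]
    rw [this]
    refine le_iInf₂ fun w hw => (mpowH_succ_le_right hw).trans ?_
    rw [← add_assoc]
    gcongr
    exact ih

lemma mpowH_anti (hD0 : ∀ y, D y y = 0) {x y : V} (hy : y ∈ H) {s t : ℕ} (hst : s ≤ t) :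
    mpowH H D t x y ≤ mpowH H D s x y := by
  induction t, hst using Nat.le_induction with
  | base => exact le_rfl
  | succ t _ ih =>
    refine (mpowH_succ_le_right hy).trans ?_
    rw [hD0, add_zero]
    exact ih

variable {Adj : V → V → Prop} {cw : V → V → ℝ≥0∞} {W : ℝ} {h : ℕ} {A : ℝ≥0∞}

/-- The greedy chain through a hitting set `H`.  The number `t` of steps is bounded by the number
of vertices of `H` strictly closer to `v` than the starting vertex, since each step moves to such
a vertex. -/
lemma exists_chain (hcw : ∀ u v, Adj u v → 1 ≤ cw u v ∧ cw u v ≤ ENNReal.ofReal W)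
    (hh : 1 ≤ h)
    (hD : ∀ u v m, m ≤ h → HasShortest Adj cw m u v → D u v ≤ A * gdist Adj cw u v)
    (hit : IsHitting Adj cw (h - 1) H) (v : V) (m : ℕ) :
    ∀ x ∈ H, HasShortest Adj cw m x v → ∃ y ∈ H, ∃ t,
      t ≤ (H.filter fun z => gdist Adj cw z v < gdist Adj cw x v).card ∧
      mpowH H D t x y + D y v ≤ A * gdist Adj cw x v := by
  induction m using Nat.strong_induction_on with
  | _ m ih =>
    intro x hx hs
    rcases le_or_gt m h with hm | hm
    · refine ⟨x, hx, 0, Nat.zero_le _, ?_⟩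
      simpa [mpowH] using hD x v m hm hs
    -- the walk is cut as `x → a → b → v` with `1`, `h - 1` and `m - h` edges
    obtain ⟨a, sa, sav, ea⟩ := HasShortest.split (i := 1) (j := (h - 1) + (m - h)) hcw
      (by convert hs using 1; omega)
    obtain ⟨b, sab, sbv, eb⟩ := sav.split hcw
    obtain ⟨z, hz, i, j, hij, saz, szb, ez⟩ := hit a b sab
    have t1 := gdist_triangle (Adj := Adj) (cw := cw) z b v
    have t2 := gdist_triangle (Adj := Adj) (cw := cw) a z v
    have t3 := gdist_triangle (Adj := Adj) (cw := cw) x a z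
    have t4 := gdist_triangle (Adj := Adj) (cw := cw) x z v
    have fxv := hs.ne_top hcw
    have faz := saz.ne_top hcw
    have fxa := sa.ne_top hcw
    have ezv : gdist Adj cw z b + gdist Adj cw b v = gdist Adj cw z v := by
      refine le_antisymm ?_ t1
      rw [← ENNReal.add_le_add_iff_left faz, ← add_assoc, ez, eb]
      exact t2
    have exz : gdist Adj cw x a + gdist Adj cw a z = gdist Adj cw x z := by
      have fzv : gdist Adj cw z v ≠ ⊤ := (HasWalk.append szb sbv).ne_top hcw |> fun q => ezv ▸ q
      refine le_antisymm ?_ t3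
      rw [← ENNReal.add_le_add_iff_right fzv, add_assoc, ← ezv, ← add_assoc (gdist Adj cw a z),
        ez, eb, ea, ezv]
      exact t4
    have exv : gdist Adj cw x z + gdist Adj cw z v = gdist Adj cw x v := by
      rw [← exz, ← ezv, ← ea, ← eb, ← ez]
      simp only [add_assoc]
    have sxz := sa.append saz exz
    have szv := szb.append sbv ezv
    have lt : gdist Adj cw z v < gdist Adj cw x v := by
      have fzv := szv.ne_top hcw
      have h1 := sxz.le_weight hcw
      have h0 : gdist Adj cw x z ≠ 0 := by
        intro e
        rw [e] at h1
        norm_cast at h1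
        omega
      rw [← exv, add_comm]
      exact ENNReal.lt_add_right fzv h0
    obtain ⟨y, hy, t, ht, hle⟩ := ih (j + (m - h)) (by omega) z hz szv
    refine ⟨y, hy, t + 1, ?_, ?_⟩
    · refine Nat.succ_le_of_lt (ht.trans_lt (Finset.card_lt_card ?_))
      rw [Finset.ssubset_iff_of_subset]
      · exact ⟨z, by simp [hz, lt], by simp⟩
      · intro w hw
        simp only [Finset.mem_filter] at hw ⊢
        exact ⟨hw.1, hw.2.trans lt⟩
    · calc mpowH H D (t + 1) x y + D y v ≤ D x z + mpowH H D t z y + D y v := by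
            gcongr
            exact mpowH_succ_le_left hx
        _ = D x z + (mpowH H D t z y + D y v) := add_assoc _ _ _
        _ ≤ A * gdist Adj cw x z + A * gdist Adj cw z v := by
            gcongr
            exact hD x z (1 + i) (by omega) sxz
        _ = A * gdist Adj cw x v := by rw [← mul_add, exv]

/-- A first step from `u` into `H`, the chain of `exists_chain` padded to `|H|` steps, and a last
step to `v`. -/
lemma mpTriple_le_of_isHitting
    (hcw : ∀ u v, Adj u v → 1 ≤ cw u v ∧ cw u v ≤ ENNReal.ofReal W) (hh : 1 ≤ h)
    (hD : ∀ u v m, m ≤ h → HasShortest Adj cw m u v → D u v ≤ A * gdist Adj cw u v)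
    (hit : IsHitting Adj cw (h - 1) H) {u v : V} {m : ℕ} (hm : h ≤ m)
    (hs : HasShortest Adj cw m u v) : mpTriple H D u v ≤ A * gdist Adj cw u v := by
  have hD0 : ∀ y, D y y = 0 := fun y => by
    simpa [gdist_self] using hD y y 0 (Nat.zero_le _) (HasShortest.self y)
  obtain ⟨b, sub, sbv, eb⟩ := HasShortest.split (i := h - 1) (j := m - (h - 1)) hcw
    (by convert hs using 1; omega)
  obtain ⟨z, hz, i, j, hij, suz, szb, ez⟩ := hit u b sub
  have fuz := suz.ne_top hcw
  have ezv : gdist Adj cw z b + gdist Adj cw b v = gdist Adj cw z v := by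
    refine le_antisymm ?_ (gdist_triangle z b v)
    rw [← ENNReal.add_le_add_iff_left fuz, ← add_assoc, ez, eb]
    exact gdist_triangle u z v
  have euv : gdist Adj cw u z + gdist Adj cw z v = gdist Adj cw u v := by
    rw [← ezv, ← eb, ← ez, add_assoc]
  obtain ⟨y, hy, t, ht, hle⟩ := exists_chain hcw hh hD hit v _ z hz (szb.append sbv ezv)
  calc mpTriple H D u v ≤ D u z + mpowH H D H.card z y + D y v :=
        iInf₂_le_of_le z hz (iInf₂_le y hy)
    _ ≤ D u z + mpowH H D t z y + D y v := by
        gcongr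
        exact mpowH_anti hD0 hy (ht.trans (Finset.card_filter_le _ _))
    _ = D u z + (mpowH H D t z y + D y v) := add_assoc _ _ _
    _ ≤ A * gdist Adj cw u z + A * gdist Adj cw z v := by
        gcongr
        exact hD u z i (by omega) suz
    _ = A * gdist Adj cw u v := by rw [← mul_add, euv]

end MinPlus

/-! ### Counting the subsets that are not hitting -/

section Counting

lemma descFactorial_sub_mul_pow_le (n h k : ℕ) :
    (n - h).descFactorial k * n ^ k ≤ n.descFactorial k * (n - h) ^ k := by
  induction k with
  | zero => simp
  | succ k ih =>
    have step : (n - h - k) * n ≤ (n - k) * (n - h) := by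
      rcases le_or_gt (n - h) k with hk | hk
      · simp [Nat.sub_eq_zero_of_le hk]
      · obtain ⟨r, rfl⟩ : ∃ r, n = r + h + k := ⟨n - h - k, by omega⟩
        have e1 : r + h + k - h - k = r := by omega
        have e2 : r + h + k - k = r + h := by omega
        have e3 : r + h + k - h = r + k := by omega
        rw [e1, e2, e3]
        nlinarith [Nat.zero_le (h * k)]
    calc (n - h).descFactorial (k + 1) * n ^ (k + 1)
        = ((n - h - k) * n) * ((n - h).descFactorial k * n ^ k) := by
          rw [Nat.descFactorial_succ, pow_succ]; ring
      _ ≤ ((n - k) * (n - h)) * (n.descFactorial k * (n - h) ^ k) := Nat.mul_le_mul step ih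
      _ = _ := by rw [Nat.descFactorial_succ, pow_succ]; ring

/-- A uniformly random `k`-subset of an `n`-set misses a fixed `h`-subset with probability at most
`(1 - h/n)^k ≤ exp (-hk/n) ≤ n^(-c)`. -/
lemma choose_sub_le {n h k : ℕ} {c : ℝ} (hn : 0 < n) (hh : 1 ≤ h) (hhn : h ≤ n)
    (hk : c * ((n : ℝ) / (h : ℝ)) * Real.log n ≤ k) :
    ((n - h).choose k : ℝ) ≤ (n : ℝ) ^ (-c) * (n.choose k : ℝ) := by
  have hn' : (0 : ℝ) < n := by exact_mod_cast hn
  have hh' : (0 : ℝ) < h := by exact_mod_cast hh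
  have h1 : ((n - h).choose k : ℝ) * (n : ℝ) ^ k ≤ n.choose k * ((n : ℝ) - h) ^ k := by
    have := descFactorial_sub_mul_pow_le n h k
    rw [Nat.descFactorial_eq_factorial_mul_choose, Nat.descFactorial_eq_factorial_mul_choose,
      mul_assoc, mul_assoc] at this
    have := Nat.le_of_mul_le_mul_left this k.factorial_pos
    have : (((n - h).choose k * n ^ k : ℕ) : ℝ) ≤ ((n.choose k * (n - h) ^ k : ℕ) : ℝ) := by
      exact_mod_cast this
    push_cast [Nat.cast_sub hhn] at this
    exact this
  have h2 : ((n - h).choose k : ℝ) ≤ n.choose k * (1 - (h : ℝ) / n) ^ k := by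
    have e : (1 - (h : ℝ) / n) = ((n : ℝ) - h) / n := by field_simp
    rw [e, div_pow, ← mul_div_assoc, le_div_iff₀ (by positivity)]
    exact h1
  have h3 : (1 - (h : ℝ) / n) ^ k ≤ (n : ℝ) ^ (-c) := by
    have h0 : 0 ≤ 1 - (h : ℝ) / n := by
      rw [sub_nonneg, div_le_one hn']
      exact_mod_cast hhn
    calc (1 - (h : ℝ) / n) ^ k ≤ Real.exp (-((h : ℝ) / n)) ^ k := by
          gcongr
          exact Real.one_sub_le_exp_neg _
      _ = Real.exp (-((h : ℝ) / n * k)) := by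
          rw [← Real.exp_nat_mul]; congr 1; ring
      _ ≤ Real.exp (Real.log n * -c) := by
          rw [Real.exp_le_exp]
          have : (h : ℝ) / n * (c * ((n : ℝ) / (h : ℝ)) * Real.log n) ≤ (h : ℝ) / n * k := by
            gcongr
          have e : (h : ℝ) / n * (c * ((n : ℝ) / (h : ℝ)) * Real.log n) = Real.log n * c := by
            field_simp
          linarith
      _ = _ := (Real.rpow_def_of_pos hn' _).symm
  calc ((n - h).choose k : ℝ) ≤ n.choose k * (1 - (h : ℝ) / n) ^ k := h2
    _ ≤ n.choose k * (n : ℝ) ^ (-c) := by gcongr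
    _ = _ := mul_comm _ _

/-- Union bound over the pairs of vertices. -/
lemma card_not_isHitting_le {V : Type*} [Fintype V] [DecidableEq V] {Adj : V → V → Prop}
    {cw : V → V → ℝ≥0∞} {W : ℝ} {h k : ℕ} {c : ℝ} [Nonempty V]
    (hcw : ∀ u v, Adj u v → 1 ≤ cw u v ∧ cw u v ≤ ENNReal.ofReal W) (hh : 1 ≤ h)
    (hk : c * ((Fintype.card V : ℝ) / (h : ℝ)) * Real.log (Fintype.card V) ≤ k) :
    (((Finset.powersetCard k (Finset.univ : Finset V)).filter
        fun H => ¬ IsHitting Adj cw (h - 1) H).card : ℝ) ≤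
      (Fintype.card V : ℝ) ^ ((2 : ℝ) - c) * ((Fintype.card V).choose k : ℝ) := by
  set n := Fintype.card V with hn
  have hn0 : 0 < n := Fintype.card_pos
  have hn' : (0 : ℝ) < n := by exact_mod_cast hn0
  let S : V × V → Finset V := fun q =>
    Finset.univ.filter fun z => OnShortest Adj cw (h - 1) q.1 q.2 z
  let P : Finset (V × V) := Finset.univ.filter fun q => HasShortest Adj cw (h - 1) q.1 q.2
  have hsub : (Finset.powersetCard k (Finset.univ : Finset V)).filter
      (fun H => ¬ IsHitting Adj cw (h - 1) H) ⊆
      P.biUnion fun q => Finset.powersetCard k (S q)ᶜ := by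
    intro H hH
    obtain ⟨hH1, hno⟩ := Finset.mem_filter.1 hH
    obtain ⟨-, hc⟩ := Finset.mem_powersetCard.1 hH1
    unfold IsHitting at hno
    push Not at hno
    obtain ⟨x, y, hs, hno⟩ := hno
    refine Finset.mem_biUnion.2 ⟨(x, y), by simpa [P] using hs, ?_⟩
    refine Finset.mem_powersetCard.2 ⟨fun z hz => ?_, hc⟩
    simpa [S] using hno z hz
  have hbound : ∀ q ∈ P, ((Finset.powersetCard k (S q)ᶜ).card : ℝ) ≤
      (n : ℝ) ^ (-c) * (n.choose k : ℝ) := by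
    intro q hq
    have hq' : HasShortest Adj cw (h - 1) q.1 q.2 := by simpa [P] using hq
    have hcard : h ≤ (S q).card := by
      have := card_onShortest hcw hq'
      rw [Nat.sub_add_cancel hh] at this
      exact this
    have hhn : h ≤ n := hcard.trans (Finset.card_le_univ _)
    refine le_trans ?_ (choose_sub_le hn0 hh hhn hk)
    rw [Finset.card_powersetCard, Finset.card_compl]
    exact_mod_cast Nat.choose_le_choose k (by omega)
  have hP : (P.card : ℝ) ≤ (n : ℝ) ^ (2 : ℕ) := by
    have : P.card ≤ n * n := by
      simpa [Fintype.card_prod, hn] using Finset.card_le_univ P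
    rw [sq]
    exact_mod_cast this
  calc _ ≤ ((P.biUnion fun q => Finset.powersetCard k (S q)ᶜ).card : ℝ) := by
        exact_mod_cast Finset.card_le_card hsub
    _ ≤ ∑ q ∈ P, ((Finset.powersetCard k (S q)ᶜ).card : ℝ) := by
        exact_mod_cast Finset.card_biUnion_le
    _ ≤ ∑ q ∈ P, (n : ℝ) ^ (-c) * (n.choose k : ℝ) := Finset.sum_le_sum hbound
    _ = P.card * ((n : ℝ) ^ (-c) * (n.choose k : ℝ)) := by simp
    _ ≤ (n : ℝ) ^ (2 : ℕ) * ((n : ℝ) ^ (-c) * (n.choose k : ℝ)) := by gcongr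
    _ = _ := by
        rw [sub_eq_add_neg, Real.rpow_add hn', Real.rpow_ofNat, mul_assoc]

end Counting

/-- **From short-hop distances to all distances (Lemma 5.8).**
`D` is a `(1+δ)`-approximate `h`-hop distance matrix of a directed graph with real edge
weights in `[1,W]`.  Then (i) for every subset `H` of size `⌈c(n/h)ln n⌉` and all `u,v`,
`dist(u,v) ≤ D̂_{u,v}` where `D̂ = D_{V,H} ⋆ D_{H,H}^{(⋆|H|)} ⋆ D_{H,V}`; and (ii) for at
least a `(1 - n^{2-c})`-fraction of such subsets `H`, every pair `u,v` admitting a shortest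
path with at least `h` edges satisfies `D̂_{u,v} ≤ (1+δ)·dist(u,v)`. -/
theorem stmt_8 {V : Type*} [Fintype V] [DecidableEq V] (n : ℕ) (hn : Fintype.card V = n)
    (Adj : V → V → Prop) (cw : V → V → ℝ≥0∞) (W : ℝ) (hW : 1 ≤ W)
    (hcw : ∀ u v, Adj u v → 1 ≤ cw u v ∧ cw u v ≤ ENNReal.ofReal W)
    (h : ℕ) (hh : 1 ≤ h) (δ : ℝ) (hδ : 0 ≤ δ) (c : ℝ) (hc : 0 < c)
    (k : ℕ) (hk : k = ⌈c * ((n : ℝ) / (h : ℝ)) * Real.log n⌉₊) (hkn : k ≤ n)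
    (D : V → V → ℝ≥0∞)
    (hD1 : ∀ u v, gdist Adj cw u v ≤ D u v)
    (hD2 : ∀ u v,
      (∃ (m : ℕ) (p : Fin (m + 1) → V), m ≤ h ∧ p 0 = u ∧ p (Fin.last m) = v ∧
        IsWalk Adj m p ∧ walkCost cw m p = gdist Adj cw u v) →
      D u v ≤ ENNReal.ofReal (1 + δ) * gdist Adj cw u v) :
    (∀ H ∈ Finset.powersetCard k (Finset.univ : Finset V), ∀ u v : V,
        gdist Adj cw u v ≤ mpTriple H D u v) ∧
    (1 - (n : ℝ) ^ ((2 : ℝ) - c)) *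
        ((Finset.powersetCard k (Finset.univ : Finset V)).card : ℝ) ≤
      (((Finset.powersetCard k (Finset.univ : Finset V)).filter (fun H =>
          ∀ u v : V,
            (∃ (m : ℕ) (p : Fin (m + 1) → V), h ≤ m ∧ p 0 = u ∧ p (Fin.last m) = v ∧
              IsWalk Adj m p ∧ walkCost cw m p = gdist Adj cw u v) →
            mpTriple H D u v ≤ ENNReal.ofReal (1 + δ) * gdist Adj cw u v)).card : ℝ) := by
  have hD : ∀ u v m, m ≤ h → HasShortest Adj cw m u v →
      D u v ≤ ENNReal.ofReal (1 + δ) * gdist Adj cw u v := by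
    intro u v m hm hs
    obtain ⟨p, hp⟩ := HasWalk.iff_fin.1 hs
    exact hD2 u v ⟨m, p, hm, hp⟩
  refine ⟨fun H _ u v => ?_, ?_⟩
  · refine le_iInf₂ fun x _ => le_iInf₂ fun y _ => ?_
    refine (gdist_triangle u y v).trans (add_le_add ?_ (hD1 y v))
    exact (gdist_triangle u x y).trans (add_le_add (hD1 u x) (gdist_le_mpowH hD1 _ x y))
  set F := Finset.powersetCard k (Finset.univ : Finset V) with hF
  have good : ∀ H, IsHitting Adj cw (h - 1) H → ∀ u v : V,
      (∃ (m : ℕ) (p : Fin (m + 1) → V), h ≤ m ∧ p 0 = u ∧ p (Fin.last m) = v ∧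
        IsWalk Adj m p ∧ walkCost cw m p = gdist Adj cw u v) →
      mpTriple H D u v ≤ ENNReal.ofReal (1 + δ) * gdist Adj cw u v := by
    rintro H hit u v ⟨m, p, hm, hp⟩
    exact mpTriple_le_of_isHitting hcw hh hD hit hm (HasWalk.iff_fin.2 ⟨p, hp⟩)
  have hle : ((F.filter fun H => IsHitting Adj cw (h - 1) H).card : ℝ) ≤ _ :=
    Nat.cast_le.2 (Finset.card_le_card (Finset.monotone_filter_right F fun H _ => good H))
  refine le_trans ?_ hle
  have hsplit : ((F.filter fun H => IsHitting Adj cw (h - 1) H).card : ℝ) +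
      ((F.filter fun H => ¬ IsHitting Adj cw (h - 1) H).card : ℝ) = F.card := by
    exact_mod_cast Finset.card_filter_add_card_filter_not (s := F) _
  rcases isEmpty_or_nonempty V with hV | hV
  · -- without vertices every set is hitting; here `0 ^ (2 - c)` is only known to be nonnegative
    have hall : F.filter (fun H => IsHitting Adj cw (h - 1) H) = F :=
      Finset.filter_true_of_mem fun H _ x => isEmptyElim x
    rw [hall]
    have : 0 ≤ (n : ℝ) ^ ((2 : ℝ) - c) := by positivity
    nlinarith [(Nat.cast_nonneg F.card : (0 : ℝ) ≤ F.card)]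
  · subst hn
    have hbad := card_not_isHitting_le (Adj := Adj) (k := k) (c := c) hcw hh
      (by rw [hk]; exact Nat.le_ceil _)
    have hcard : F.card = (Fintype.card V).choose k := by
      rw [hF, Finset.card_powersetCard, Finset.card_univ]
    rw [← hcard, ← hF] at hbad
    linarith
end

section
/- Let G = (V,E) be a graph with n nodes and real edge weights c_{u,v} ∈ [1,W]. For any A, B > 0 define G' = (V, E') where E' = {(u,v) ∈ E : c_{u,v} ≤ B} and G' has integer edge weights c'_{u,v} = ⌈A·c_{u,v}/B⌉. Then for every pair of nodes s,t with dist_G(s,t) ≤ B: dist_G(s,t) ≤ (B/A)·dist_{G'}(s,t), and if some shortest s–t path in G uses h edges, then (B/A)·dist_{G'}(s,t) ≤ dist_G(s,t) + (B/A)·h. -/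
/-!
The rounding is compared with the original weights edge by edge. Since `x ≤ ⌈x⌉ < x + 1` at
`x = A·c/B`, scaling by `B/A` gives `c ≤ (B/A)·⌈A·c/B⌉ ≤ c + B/A`. Summing the first inequality
along any walk of `G'` (which is also a walk of `G`) bounds `dist_G` by `(B/A)·dist_{G'}`.
Summing the second along a shortest walk of `G` with `h` edges gives the error `(B/A)·h`; this walk
survives in `G'`, because its total weight is at most `B`, hence so is the weight of each edge.
-/

open scoped BigOperators Classical ENNReal

theorem gdist_le_walkCost {V : Type*} {Adj : V → V → Prop} (c : V → V → ℝ≥0∞) {k : ℕ}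
    {p : Fin (k + 1) → V} (hp : IsWalk Adj k p) :
    gdist Adj c (p 0) (p (Fin.last k)) ≤ walkCost c k p :=
  iInf_le_of_le k (iInf_le_of_le ⟨p, rfl, rfl, hp⟩ le_rfl)

theorem ofReal_le_mul_ceil {A B : ℝ} (hA : 0 < A) (hB : 0 < B) (x : ℝ) :
    ENNReal.ofReal x ≤ ENNReal.ofReal (B / A) * (⌈A * x / B⌉₊ : ℝ≥0∞) := by
  rw [← ENNReal.ofReal_natCast, ← ENNReal.ofReal_mul (by positivity)]
  apply ENNReal.ofReal_le_ofReal
  calc x = B / A * (A * x / B) := by field_simp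
    _ ≤ _ := mul_le_mul_of_nonneg_left (Nat.le_ceil _) (by positivity)

theorem mul_ceil_le_ofReal_add {A B : ℝ} (hA : 0 < A) (hB : 0 < B) {x : ℝ} (hx : 0 ≤ x) :
    ENNReal.ofReal (B / A) * (⌈A * x / B⌉₊ : ℝ≥0∞) ≤
      ENNReal.ofReal x + ENNReal.ofReal (B / A) := by
  rw [← ENNReal.ofReal_natCast, ← ENNReal.ofReal_mul (by positivity),
    ← ENNReal.ofReal_add hx (by positivity)]
  apply ENNReal.ofReal_le_ofReal
  calc B / A * (⌈A * x / B⌉₊ : ℝ) ≤ B / A * (A * x / B + 1) :=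
        mul_le_mul_of_nonneg_left (Nat.ceil_lt_add_one (by positivity)).le (by positivity)
    _ = x + B / A := by field_simp

/-- **Weight rounding (Lemma 5.10).**
`G` has real weights `c ∈ [1,W]`; `G'` keeps only the edges of weight at most `B` and gives
them integer weights `⌈A·c/B⌉`.  For every pair `s, t` with `dist_G(s,t) ≤ B`:
`dist_G(s,t) ≤ (B/A)·dist_{G'}(s,t)`, and if some shortest `s–t` path in `G` uses `h`
edges, then `(B/A)·dist_{G'}(s,t) ≤ dist_G(s,t) + (B/A)·h`. -/
theorem stmt_10 {V : Type*} [Fintype V] (n : ℕ) (hn : Fintype.card V = n)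
    (Adj : V → V → Prop) (c : V → V → ℝ) (W : ℝ)
    (hc : ∀ u v, Adj u v → 1 ≤ c u v ∧ c u v ≤ W)
    (A B : ℝ) (hA : 0 < A) (hB : 0 < B) (s t : V)
    (hst : gdist Adj (fun u v => ENNReal.ofReal (c u v)) s t ≤ ENNReal.ofReal B) :
    gdist Adj (fun u v => ENNReal.ofReal (c u v)) s t ≤
      ENNReal.ofReal (B / A) *
        gdist (fun u v => Adj u v ∧ c u v ≤ B)
          (fun u v => (⌈A * c u v / B⌉₊ : ℝ≥0∞)) s t ∧
    ∀ (h : ℕ) (p : Fin (h + 1) → V), p 0 = s → p (Fin.last h) = t → IsWalk Adj h p →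
      walkCost (fun u v => ENNReal.ofReal (c u v)) h p =
        gdist Adj (fun u v => ENNReal.ofReal (c u v)) s t →
      ENNReal.ofReal (B / A) *
          gdist (fun u v => Adj u v ∧ c u v ≤ B)
            (fun u v => (⌈A * c u v / B⌉₊ : ℝ≥0∞)) s t ≤
        gdist Adj (fun u v => ENNReal.ofReal (c u v)) s t +
          ENNReal.ofReal (B / A) * (h : ℝ≥0∞) := by
  refine ⟨?_, ?_⟩
  · -- Pushing the finite scalar `B / A` inside the infimum reduces the claim to single walks.
    unfold gdist
    simp_rw [ENNReal.mul_iInf_of_ne (ENNReal.ofReal_pos.2 (div_pos hB hA)).ne'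
      ENNReal.ofReal_ne_top]
    refine le_iInf fun k => le_iInf ?_
    rintro ⟨p, rfl, rfl, hp⟩
    refine (gdist_le_walkCost _ fun i => (hp i).1).trans ?_
    unfold walkCost
    rw [Finset.mul_sum]
    exact Finset.sum_le_sum fun i _ => ofReal_le_mul_ceil hA hB _
  · rintro h p rfl rfl hp hcost
    have hp' : IsWalk (fun u v => Adj u v ∧ c u v ≤ B) h p := by
      refine fun i => ⟨hp i, (ENNReal.ofReal_le_ofReal_iff hB.le).1 ?_⟩
      refine le_trans ?_ (hcost.le.trans hst)
      exact Finset.single_le_sum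
        (f := fun i : Fin h => ENNReal.ofReal (c (p i.castSucc) (p i.succ)))
        (fun _ _ => zero_le) (Finset.mem_univ i)
    rw [← hcost]
    refine (mul_le_mul_right (gdist_le_walkCost _ hp') _).trans ?_
    unfold walkCost
    rw [Finset.mul_sum]
    refine (Finset.sum_le_sum fun i _ => mul_ceil_le_ofReal_add hA hB
      (zero_le_one.trans (hc _ _ (hp i)).1)).trans ?_
    simp [Finset.sum_add_distrib, mul_comm]
end

section
/- Let 0 ≤ s, let ε > 0, and let G = (V,E) be a graph with n nodes and real edge weights c_{u,v} ∈ [1,W]. For i = 1, …, ⌈log₂(nW)⌉ define the graph G_i = (V, E_i) with E_i = {(u,v) ∈ E : c_{u,v} ≤ B_i} and integer edge weights ⌈A·c_{u,v}/B_i⌉, where B_i = 2^i and A = 2 n^s / ε. Then for every pair of nodes s',t': dist_G(s',t') ≤ min_i (B_i/A)·dist_{G_i}(s',t'); and if some shortest s'–t' path in G uses at most n^s edges, then also min_i (B_i/A)·dist_{G_i}(s',t') ≤ (1+ε)·dist_G(s',t'). -/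
/-!
Rounding up can only increase weights, so `(B/A)⌈A c/B⌉ ≥ c` on every edge and every walk of a
scaled graph costs at least as much as the same walk in `G` (`ofReal_le_scaled`).

For the upper bound, take a shortest walk `p` with `m ≤ n^s` edges and total weight `D`. Rounding
adds less than `B/A` per edge, so at most `m B/A ≤ ε B/2` in total (`scaled_sum_le`). For
`m > 0` it remains to find a scale `B = 2^i` that keeps all edges of `p` and satisfies `B ≤ 2 D`
(`exists_scale`): the least admissible `i ≥ 1` works, because either `i = 1` and `B = 2 ≤ 2 D`
as all weights are at least `1`, or some edge of `p`, hence `D`, exceeds `B/2`. This `i` is in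
range because no weight exceeds `W ≤ n W`.
-/

open scoped BigOperators Classical ENNReal

/-- `min_{1 ≤ i ≤ N} (Bᵢ/A)·dist_{Gᵢ}(u,v)` where `Bᵢ = 2^i` and `Gᵢ` keeps the edges of
weight at most `Bᵢ` with rounded integer weights `⌈A·c/Bᵢ⌉`. -/
noncomputable def scaledMin {V : Type*} (Adj : V → V → Prop) (c : V → V → ℝ) (N : ℕ)
    (A : ℝ) (u v : V) : ℝ≥0∞ :=
  ⨅ i ∈ Finset.Icc 1 N,
    ENNReal.ofReal ((2 : ℝ) ^ i / A) *
      gdist (fun x y => Adj x y ∧ c x y ≤ (2 : ℝ) ^ i)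
        (fun x y => (⌈A * c x y / (2 : ℝ) ^ i⌉₊ : ℝ≥0∞)) u v

/-- Scaling a rounded weight back dominates the original weight. -/
lemma ofReal_le_scaled {A B x : ℝ} (hA : 0 < A) (hB : 0 < B) :
    ENNReal.ofReal x ≤ ENNReal.ofReal (B / A) * ((⌈A * x / B⌉₊ : ℕ) : ℝ≥0∞) := by
  rw [← ENNReal.ofReal_natCast, ← ENNReal.ofReal_mul (by positivity)]
  apply ENNReal.ofReal_le_ofReal
  calc x = B / A * (A * x / B) := by field_simp
    _ ≤ _ := by gcongr; exact Nat.le_ceil _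

/-- Rounding `m` weights adds at most `m * (B / A)` after scaling back. -/
lemma scaled_sum_le {A B : ℝ} (hA : 0 < A) (hB : 0 < B) (m : ℕ) (w : Fin m → ℝ)
    (hw : ∀ j, 0 ≤ w j) :
    B / A * ∑ j, (⌈A * w j / B⌉₊ : ℝ) ≤ ∑ j, w j + m * (B / A) := by
  have h : ∀ j, B / A * (⌈A * w j / B⌉₊ : ℝ) ≤ w j + B / A := by
    intro j
    have h0 : 0 ≤ A * w j / B := by have := hw j; positivity
    calc B / A * (⌈A * w j / B⌉₊ : ℝ) ≤ B / A * (A * w j / B + 1) := by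
          gcongr; exact (Nat.ceil_lt_add_one h0).le
      _ = _ := by field_simp
  rw [Finset.mul_sum]
  refine (Finset.sum_le_sum fun j _ => h j).trans_eq ?_
  simp [Finset.sum_add_distrib]

/-- Some scale `2 ^ i` keeps all the given weights and, if there are any, is at most twice
their sum. -/
lemma exists_scale (N : ℕ) (hN : 1 ≤ N) (m : ℕ) (w : Fin m → ℝ)
    (hw : ∀ j, 1 ≤ w j) (hwN : ∀ j, w j ≤ (2 : ℝ) ^ N) :
    ∃ i ∈ Finset.Icc 1 N, (∀ j, w j ≤ (2 : ℝ) ^ i) ∧ (0 < m → (2 : ℝ) ^ i ≤ 2 * ∑ j, w j) := by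
  have hex : ∃ i, 1 ≤ i ∧ ∀ j, w j ≤ (2 : ℝ) ^ i := ⟨N, hN, hwN⟩
  have hle : ∀ j, w j ≤ ∑ j, w j := fun j =>
    Finset.single_le_sum (f := w) (fun k _ => zero_le_one.trans (hw k)) (Finset.mem_univ j)
  obtain ⟨h1, h2⟩ := Nat.find_spec hex
  refine ⟨Nat.find hex, Finset.mem_Icc.2 ⟨h1, Nat.find_min' hex ⟨hN, hwN⟩⟩, h2, fun hm => ?_⟩
  rcases h1.eq_or_lt with h | h
  · rw [← h]
    linarith [hle ⟨0, hm⟩, hw ⟨0, hm⟩]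
  · have hmin := Nat.find_min hex (m := Nat.find hex - 1) (by omega)
    push Not at hmin
    obtain ⟨j, hj⟩ := hmin (by omega)
    have hp : (2 : ℝ) ^ Nat.find hex = 2 * 2 ^ (Nat.find hex - 1) := by
      rw [← pow_succ']; congr 1; omega
    rw [hp]
    linarith [hle j]

/-- **Parallel scaled graphs (Lemma 5.11).**
With `Bᵢ = 2^i` for `i = 1, …, ⌈log₂(nW)⌉` and `A = 2n^s/ε`, the graphs `Gᵢ` obtained by
rounding as in Lemma 5.10 satisfy: `dist_G(s',t') ≤ min_i (Bᵢ/A)·dist_{Gᵢ}(s',t')`; and if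
some shortest `s'–t'` path of `G` uses at most `n^s` edges, then
`min_i (Bᵢ/A)·dist_{Gᵢ}(s',t') ≤ (1+ε)·dist_G(s',t')`. -/
theorem stmt_11 {V : Type*} [Fintype V] (n : ℕ) (hn : Fintype.card V = n) (hn2 : 2 ≤ n)
    (s : ℝ) (hs : 0 ≤ s) (ε : ℝ) (hε : 0 < ε)
    (Adj : V → V → Prop) (c : V → V → ℝ) (W : ℝ) (hW : 1 ≤ W)
    (hc : ∀ u v, Adj u v → 1 ≤ c u v ∧ c u v ≤ W)
    (s' t' : V) :
    gdist Adj (fun u v => ENNReal.ofReal (c u v)) s' t' ≤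
      scaledMin Adj c ⌈Real.logb 2 ((n : ℝ) * W)⌉₊ (2 * (n : ℝ) ^ s / ε) s' t' ∧
    ((∃ (m : ℕ) (p : Fin (m + 1) → V), (m : ℝ) ≤ (n : ℝ) ^ s ∧ p 0 = s' ∧
        p (Fin.last m) = t' ∧ IsWalk Adj m p ∧
        walkCost (fun u v => ENNReal.ofReal (c u v)) m p =
          gdist Adj (fun u v => ENNReal.ofReal (c u v)) s' t') →
      scaledMin Adj c ⌈Real.logb 2 ((n : ℝ) * W)⌉₊ (2 * (n : ℝ) ^ s / ε) s' t' ≤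
        ENNReal.ofReal (1 + ε) * gdist Adj (fun u v => ENNReal.ofReal (c u v)) s' t') := by
  have hn1 : (2 : ℝ) ≤ n := by exact_mod_cast hn2
  have hns : 0 < (n : ℝ) ^ s := Real.rpow_pos_of_pos (by linarith) s
  have hA : 0 < 2 * (n : ℝ) ^ s / ε := by positivity
  constructor
  · refine le_iInf₂ fun i _ => ?_
    have hB : (0 : ℝ) < 2 ^ i := by positivity
    have hr : 0 < (2 : ℝ) ^ i / (2 * (n : ℝ) ^ s / ε) := by positivity
    have hr0 := (ENNReal.ofReal_pos.2 hr).ne'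
    unfold gdist
    simp only [ENNReal.mul_iInf_of_ne hr0 ENNReal.ofReal_ne_top]
    refine le_iInf₂ fun k p => ?_
    refine (iInf₂_le k ⟨p.1, p.2.1, p.2.2.1, fun j => (p.2.2.2 j).1⟩).trans ?_
    unfold walkCost
    rw [Finset.mul_sum]
    exact Finset.sum_le_sum fun j _ => ofReal_le_scaled hA hB
  · rintro ⟨m, p, hm, hp0, hpm, hwalk, hcost⟩
    rw [← hcost]
    have hnW : (2 : ℝ) ≤ n * W := by nlinarith
    have hlog : 1 ≤ Real.logb 2 (n * W) := by
      rw [Real.le_logb_iff_rpow_le one_lt_two (by linarith)]; simpa using hnW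
    have hN : 1 ≤ ⌈Real.logb 2 (n * W)⌉₊ := by
      exact_mod_cast hlog.trans (Nat.le_ceil _)
    have hWN : W ≤ (2 : ℝ) ^ ⌈Real.logb 2 (n * W)⌉₊ := by
      have h := (Real.logb_le_iff_le_rpow one_lt_two (by linarith)).1
        (Nat.le_ceil (Real.logb 2 (n * W)))
      rw [Real.rpow_natCast] at h
      nlinarith
    obtain ⟨i, hi, hkeep, hB2⟩ := exists_scale _ hN m
      (fun j : Fin m => c (p j.castSucc) (p j.succ))
      (fun j => (hc _ _ (hwalk j)).1) (fun j => (hc _ _ (hwalk j)).2.trans hWN)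
    have hw0 : ∀ j : Fin m, 0 ≤ c (p j.castSucc) (p j.succ) :=
      fun j => zero_le_one.trans (hc _ _ (hwalk j)).1
    have hB : (0 : ℝ) < 2 ^ i := by positivity
    have hsum := scaled_sum_le hA hB m (fun j : Fin m => c (p j.castSucc) (p j.succ)) hw0
    -- The total rounding error is at most `ε * D`; the empty walk has none.
    have herr : (m : ℝ) * (2 ^ i / (2 * (n : ℝ) ^ s / ε)) ≤
        ε * ∑ j : Fin m, c (p j.castSucc) (p j.succ) := by
      rcases Nat.eq_zero_or_pos m with h | h
      · subst h; simp
      · calc (m : ℝ) * (2 ^ i / (2 * (n : ℝ) ^ s / ε))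
            ≤ (n : ℝ) ^ s * (2 ^ i / (2 * (n : ℝ) ^ s / ε)) := by gcongr
          _ = ε * (2 ^ i / 2) := by field_simp
          _ ≤ _ := by gcongr; linarith [hB2 h]
    refine (iInf₂_le i hi).trans ?_
    refine (mul_le_mul_right (iInf₂_le m ⟨p, hp0, hpm, fun j => ⟨hwalk j, hkeep j⟩⟩) _).trans ?_
    unfold walkCost
    rw [← ENNReal.ofReal_sum_of_nonneg fun j _ => hw0 j, ← ENNReal.ofReal_mul (by positivity),
      ← Nat.cast_sum, ← ENNReal.ofReal_natCast, ← ENNReal.ofReal_mul (by positivity)]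
    apply ENNReal.ofReal_le_ofReal
    push_cast
    linarith
end
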